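/- arXiv:1612.07197 — 3 statements merged into one kernel-verified Lean document; each statement's English description precedes it below -/
import Mathlib

section
/- Let α > 1 and β > 1/2 be real numbers with β − 1/2 < α < β + 1/2. Then there exists a constant C > 0, depending only on α and β, such that for every real T ≥ 1, setting ζ_T = T^{−α/(α+2β)}, one has ∑_{j=1}^{∞} ζ_T² · j^{−2β} / (j^{−α} + ζ_T)² ≤ C · T^{−(2β−1)/(α+2β)}. -/
/-!
With `ζ = R ^ (-α)` the `j`-th term equals `R ^ (-2β) φ(j / R)`, where
`φ(u) = u ^ (-2β) / (u ^ (-α) + 1) ^ 2` does not depend on `ζ`. Since `φ(u)` is at most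
`u ^ (2α - 2β)` (useful near `0`) and at most `u ^ (-2β)` (useful near `∞`), it lies below the
minimum of two powers `u ^ r` and `u ^ (-2β)` with `-1 < r ≤ 0`. That minimum is decreasing and
integrable on `(0, ∞)`, so the sum over `j` is at most `R ^ (-2β) · R` times its integral, and
`R = T ^ (1 / (α + 2β))` gives the rate.
-/

open MeasureTheory Set

section Dilation

variable {R : ℝ}

theorem antitoneOn_Ioi_comp_div {β : Type*} [Preorder β] {f : ℝ → β} (hR : 0 < R)
    (hf : AntitoneOn f (Ioi 0)) : AntitoneOn (fun x => f (x / R)) (Ioi 0) := fun _ hx _ hy hxy =>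
  hf (div_pos hx hR) (div_pos hy hR) (by gcongr)

theorem integrableOn_Ioi_comp_div {E : Type*} [NormedAddCommGroup E] {f : ℝ → E} (hR : 0 < R)
    (hf : IntegrableOn f (Ioi 0)) : IntegrableOn (fun x => f (x / R)) (Ioi 0) := by
  simpa only [div_eq_mul_inv] using
    (integrableOn_Ioi_comp_mul_right_iff f 0 (inv_pos.2 hR)).2 (by rwa [zero_mul])

theorem integral_Ioi_comp_div {E : Type*} [NormedAddCommGroup E] [NormedSpace ℝ E] (f : ℝ → E)
    (hR : 0 < R) : ∫ x in Ioi 0, f (x / R) = R • ∫ x in Ioi 0, f x := by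
  simpa only [div_eq_mul_inv, inv_inv, zero_mul] using
    integral_comp_mul_right_Ioi f 0 (inv_pos.2 hR)

end Dilation

section IntegralTest

variable {f : ℝ → ℝ}

-- Mathlib's integral test asks for `AntitoneOn f (Ici 0)`, which fails if `f` blows up at `0`.
theorem sum_range_succ_le_integral_Ioi_of_antitoneOn (hf : AntitoneOn f (Ioi 0))
    (hfi : IntegrableOn f (Ioi 0)) (hf0 : ∀ x ∈ Ioi 0, 0 ≤ f x) (n : ℕ) :
    ∑ i ∈ Finset.range n, f ((i + 1 : ℕ) : ℝ) ≤ ∫ x in Ioi 0, f x := by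
  have hint (i : ℕ) : IntervalIntegrable f volume (i : ℝ) ((i + 1 : ℕ) : ℝ) := by
    rw [intervalIntegrable_iff_integrableOn_Ioc_of_le (by simp)]
    exact hfi.mono_set fun x hx => i.cast_nonneg.trans_lt hx.1
  calc ∑ i ∈ Finset.range n, f ((i + 1 : ℕ) : ℝ)
      = ∑ i ∈ Finset.range n, ∫ _ in (i : ℝ)..((i + 1 : ℕ) : ℝ), f ((i + 1 : ℕ) : ℝ) := by simp
    _ ≤ ∑ i ∈ Finset.range n, ∫ x in (i : ℝ)..((i + 1 : ℕ) : ℝ), f x := by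
        gcongr with i
        refine intervalIntegral.integral_mono_on_of_le_Ioo (by simp) (by simp) (hint i)
          fun x hx => ?_
        have hx0 : 0 < x := i.cast_nonneg.trans_lt hx.1
        exact hf hx0 (hx0.trans hx.2) hx.2.le
    _ = ∫ x in Ioc (0 : ℝ) n, f x := by
        rw [intervalIntegral.sum_integral_adjacent_intervals fun i _ => hint i, Nat.cast_zero,
          intervalIntegral.integral_of_le n.cast_nonneg]
    _ ≤ ∫ x in Ioi 0, f x :=
        setIntegral_mono_set hfi (ae_restrict_of_forall_mem measurableSet_Ioi hf0)
          Ioc_subset_Ioi_self.eventuallyLE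

theorem summable_pnat_of_antitoneOn_Ioi (hf : AntitoneOn f (Ioi 0))
    (hfi : IntegrableOn f (Ioi 0)) (hf0 : ∀ x ∈ Ioi 0, 0 ≤ f x) :
    Summable fun j : ℕ+ => f j :=
  (summable_pnat_iff_summable_succ (f := fun j : ℕ => f j)).2 <|
    summable_of_sum_range_le (fun _ => hf0 _ (by simp [Nat.cast_add_one_pos]))
      (sum_range_succ_le_integral_Ioi_of_antitoneOn hf hfi hf0)

theorem tsum_pnat_le_integral_Ioi_of_antitoneOn (hf : AntitoneOn f (Ioi 0))
    (hfi : IntegrableOn f (Ioi 0)) (hf0 : ∀ x ∈ Ioi 0, 0 ≤ f x) :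
    ∑' j : ℕ+, f j ≤ ∫ x in Ioi 0, f x := by
  rw [tsum_pnat_eq_tsum_succ (f := fun j : ℕ => f j)]
  exact Real.tsum_le_of_sum_range_le (fun _ => hf0 _ (by simp [Nat.cast_add_one_pos]))
    (sum_range_succ_le_integral_Ioi_of_antitoneOn hf hfi hf0)

variable {R : ℝ}

theorem summable_pnat_div_of_antitoneOn_Ioi (hR : 0 < R) (hf : AntitoneOn f (Ioi 0))
    (hfi : IntegrableOn f (Ioi 0)) (hf0 : ∀ x ∈ Ioi 0, 0 ≤ f x) :
    Summable fun j : ℕ+ => f (j / R) :=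
  summable_pnat_of_antitoneOn_Ioi (antitoneOn_Ioi_comp_div hR hf)
    (integrableOn_Ioi_comp_div hR hfi) fun _ hx => hf0 _ (div_pos hx hR)

theorem tsum_pnat_div_le_integral_Ioi_of_antitoneOn (hR : 0 < R) (hf : AntitoneOn f (Ioi 0))
    (hfi : IntegrableOn f (Ioi 0)) (hf0 : ∀ x ∈ Ioi 0, 0 ≤ f x) :
    ∑' j : ℕ+, f (j / R) ≤ R * ∫ x in Ioi 0, f x :=
  (tsum_pnat_le_integral_Ioi_of_antitoneOn (antitoneOn_Ioi_comp_div hR hf)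
    (integrableOn_Ioi_comp_div hR hfi) fun _ hx => hf0 _ (div_pos hx hR)).trans_eq
      (integral_Ioi_comp_div f hR)

end IntegralTest

section MinRpow

variable {r s : ℝ}

theorem antitoneOn_min_rpow (hr : r ≤ 0) (hs : s ≤ 0) :
    AntitoneOn (fun x : ℝ => min (x ^ r) (x ^ s)) (Ioi 0) :=
  (Real.antitoneOn_rpow_Ioi_of_exponent_nonpos hr).min
    (Real.antitoneOn_rpow_Ioi_of_exponent_nonpos hs)

theorem min_rpow_nonneg {x : ℝ} (hx : 0 ≤ x) : 0 ≤ min (x ^ r) (x ^ s) :=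
  le_min (Real.rpow_nonneg hx r) (Real.rpow_nonneg hx s)

theorem eqOn_min_rpow_Ioc (h : s ≤ r) :
    EqOn (fun x : ℝ => min (x ^ r) (x ^ s)) (fun x => x ^ r) (Ioc 0 1) := fun _ hx =>
  min_eq_left (Real.rpow_le_rpow_of_exponent_ge hx.1 hx.2 h)

theorem eqOn_min_rpow_Ioi (h : s ≤ r) :
    EqOn (fun x : ℝ => min (x ^ r) (x ^ s)) (fun x => x ^ s) (Ioi 1) := fun _ hx =>
  min_eq_right (Real.rpow_le_rpow_of_exponent_le (mem_Ioi.1 hx).le h)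

theorem integrableOn_min_rpow_Ioc (hr : -1 < r) (h : s ≤ r) :
    IntegrableOn (fun x : ℝ => min (x ^ r) (x ^ s)) (Ioc 0 1) :=
  ((intervalIntegrable_iff_integrableOn_Ioc_of_le zero_le_one).1
    (intervalIntegral.intervalIntegrable_rpow' hr)).congr_fun
      (eqOn_min_rpow_Ioc h).symm measurableSet_Ioc

theorem integrableOn_min_rpow_Ioi_one (hs : s < -1) (h : s ≤ r) :
    IntegrableOn (fun x : ℝ => min (x ^ r) (x ^ s)) (Ioi 1) :=
  (integrableOn_Ioi_rpow_of_lt hs one_pos).congr_fun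
    (eqOn_min_rpow_Ioi h).symm measurableSet_Ioi

theorem integrableOn_min_rpow_Ioi_zero (hr : -1 < r) (hs : s < -1) :
    IntegrableOn (fun x : ℝ => min (x ^ r) (x ^ s)) (Ioi 0) := by
  have h : s ≤ r := (hs.trans hr).le
  rw [← Ioc_union_Ioi_eq_Ioi zero_le_one]
  exact (integrableOn_min_rpow_Ioc hr h).union (integrableOn_min_rpow_Ioi_one hs h)

theorem integral_Ioi_zero_min_rpow (hr : -1 < r) (hs : s < -1) :
    ∫ x : ℝ in Ioi 0, min (x ^ r) (x ^ s) = (r + 1)⁻¹ - (s + 1)⁻¹ := by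
  have h : s ≤ r := (hs.trans hr).le
  have hnear : ∫ x : ℝ in Ioc 0 1, min (x ^ r) (x ^ s) = (r + 1)⁻¹ := by
    rw [setIntegral_congr_fun measurableSet_Ioc (eqOn_min_rpow_Ioc h),
      ← intervalIntegral.integral_of_le zero_le_one, integral_rpow (Or.inl hr), Real.one_rpow,
      Real.zero_rpow (by linarith), sub_zero, one_div]
  have hfar : ∫ x : ℝ in Ioi 1, min (x ^ r) (x ^ s) = -(s + 1)⁻¹ := by
    rw [setIntegral_congr_fun measurableSet_Ioi (eqOn_min_rpow_Ioi h),
      integral_Ioi_rpow_of_lt hs one_pos, Real.one_rpow, neg_div, one_div]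
  rw [← Ioc_union_Ioi_eq_Ioi zero_le_one,
    setIntegral_union (Ioc_disjoint_Ioi le_rfl) measurableSet_Ioi
      (integrableOn_min_rpow_Ioc hr h) (integrableOn_min_rpow_Ioi_one hs h),
    hnear, hfar, ← sub_eq_add_neg]

variable {R : ℝ}

theorem summable_min_rpow_pnat_div (hr : -1 < r) (hr0 : r ≤ 0) (hs : s < -1) (hR : 0 < R) :
    Summable fun j : ℕ+ => min ((j / R : ℝ) ^ r) ((j / R : ℝ) ^ s) :=
  summable_pnat_div_of_antitoneOn_Ioi (f := fun x => min (x ^ r) (x ^ s)) hR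
    (antitoneOn_min_rpow hr0 (by linarith)) (integrableOn_min_rpow_Ioi_zero hr hs)
    fun _ hx => min_rpow_nonneg (mem_Ioi.1 hx).le

theorem tsum_min_rpow_pnat_div_le (hr : -1 < r) (hr0 : r ≤ 0) (hs : s < -1) (hR : 0 < R) :
    ∑' j : ℕ+, min ((j / R : ℝ) ^ r) ((j / R : ℝ) ^ s) ≤ R * ((r + 1)⁻¹ - (s + 1)⁻¹) := by
  rw [← integral_Ioi_zero_min_rpow hr hs]
  exact tsum_pnat_div_le_integral_Ioi_of_antitoneOn (f := fun x => min (x ^ r) (x ^ s)) hR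
    (antitoneOn_min_rpow hr0 (by linarith)) (integrableOn_min_rpow_Ioi_zero hr hs)
    fun _ hx => min_rpow_nonneg (mem_Ioi.1 hx).le

end MinRpow

/-- The squared regularisation bias of a Tikhonov estimator with ridge parameter `ζ` in the
coordinate of index `x`, where the operator has eigenvalue `x ^ (-α)` and the filter has
coefficient `x ^ (-β)`. The index is a real number, so that the bias can be dilated. -/
noncomputable def tikhonovBias (α β ζ x : ℝ) : ℝ :=
  ζ ^ 2 * x ^ (-(2 * β)) / (x ^ (-α) + ζ) ^ 2

namespace tikhonovBias

variable {α β ζ x R r : ℝ}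

theorem nonneg (hx : 0 < x) : 0 ≤ tikhonovBias α β ζ x := by
  unfold tikhonovBias
  positivity

theorem le_rpow (hζ : 0 ≤ ζ) (hx : 0 < x) : tikhonovBias α β ζ x ≤ x ^ (-(2 * β)) := by
  rw [tikhonovBias, div_le_iff₀ (by positivity), mul_comm]
  gcongr
  exact le_add_of_nonneg_left (by positivity)

theorem le_sq_mul_rpow (hζ : 0 ≤ ζ) (hx : 0 < x) :
    tikhonovBias α β ζ x ≤ ζ ^ 2 * x ^ (2 * (α - β)) := by
  have hsplit : x ^ (-(2 * β)) = x ^ (2 * (α - β)) * (x ^ (-α)) ^ 2 := by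
    rw [← Real.rpow_mul_natCast hx.le, ← Real.rpow_add hx]
    ring_nf
  rw [tikhonovBias, div_le_iff₀ (by positivity), hsplit, ← mul_assoc]
  gcongr
  exact le_add_of_nonneg_right hζ

theorem ridge_one_le_min_rpow (hr : r ≤ 2 * (α - β)) (hβr : -(2 * β) ≤ r) (hx : 0 < x) :
    tikhonovBias α β 1 x ≤ min (x ^ r) (x ^ (-(2 * β))) := by
  refine le_min ?_ (le_rpow zero_le_one hx)
  rcases le_total x 1 with hx1 | hx1
  · calc tikhonovBias α β 1 x ≤ x ^ (2 * (α - β)) := by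
          simpa using le_sq_mul_rpow zero_le_one hx
      _ ≤ x ^ r := Real.rpow_le_rpow_of_exponent_ge hx hx1 hr
  · exact (le_rpow zero_le_one hx).trans (Real.rpow_le_rpow_of_exponent_le hx1 hβr)

theorem ridge_rpow_neg_eq_mul (hR : 0 < R) (hx : 0 ≤ x) :
    tikhonovBias α β (R ^ (-α)) x = R ^ (-(2 * β)) * tikhonovBias α β 1 (x / R) := by
  simp only [tikhonovBias, Real.div_rpow hx hR.le]
  field_simp

theorem ridge_rpow_neg_le_min_rpow (hR : 0 < R) (hr : r ≤ 2 * (α - β)) (hβr : -(2 * β) ≤ r)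
    (hx : 0 < x) :
    tikhonovBias α β (R ^ (-α)) x ≤
      R ^ (-(2 * β)) * min ((x / R) ^ r) ((x / R) ^ (-(2 * β))) := by
  rw [ridge_rpow_neg_eq_mul hR hx.le]
  gcongr
  exact ridge_one_le_min_rpow hr hβr (by positivity)

theorem summable_pnat (hβ : 1 / 2 < β) (hζ : 0 ≤ ζ) :
    Summable fun j : ℕ+ => tikhonovBias α β ζ j := by
  have hpow : Summable fun j : ℕ+ => (j : ℝ) ^ (-(2 * β)) :=
    summable_pnat_iff_summable_nat.2 (Real.summable_nat_rpow.2 (by linarith))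
  exact hpow.of_nonneg_of_le (fun j => nonneg (by simp)) fun j => le_rpow hζ (by simp)

theorem tsum_pnat_ridge_rpow_neg_le (hβ : 1 / 2 < β) (hr : -1 < r) (hr0 : r ≤ 0)
    (hrαβ : r ≤ 2 * (α - β)) (hR : 0 < R) :
    ∑' j : ℕ+, tikhonovBias α β (R ^ (-α)) j ≤
      ((r + 1)⁻¹ + (2 * β - 1)⁻¹) * R ^ (-(2 * β - 1)) := by
  have hs : -(2 * β) < -1 := by linarith
  calc ∑' j : ℕ+, tikhonovBias α β (R ^ (-α)) j
      ≤ ∑' j : ℕ+, R ^ (-(2 * β)) * min ((j / R : ℝ) ^ r) ((j / R : ℝ) ^ (-(2 * β))) :=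
        (summable_pnat hβ (by positivity)).tsum_le_tsum
          (fun j => ridge_rpow_neg_le_min_rpow hR hrαβ (by linarith) (by simp))
          ((summable_min_rpow_pnat_div hr hr0 hs hR).mul_left _)
    _ ≤ R ^ (-(2 * β)) * (R * ((r + 1)⁻¹ - (-(2 * β) + 1)⁻¹)) := by
        rw [tsum_mul_left]
        gcongr
        exact tsum_min_rpow_pnat_div_le hr hr0 hs hR
    _ = ((r + 1)⁻¹ + (2 * β - 1)⁻¹) * R ^ (-(2 * β - 1)) := by
        have hexp : -(2 * β) + 1 = -(2 * β - 1) := by ring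
        rw [← mul_assoc, ← Real.rpow_add_one hR.ne', hexp, inv_neg]
        ring

end tikhonovBias

theorem sequence_lemma_A_general {α β : ℝ} (hβ : 1 / 2 < β) (hαβ : β - 1 / 2 < α) :
    ∃ C > (0 : ℝ), ∀ T : ℝ, 0 < T →
      (Summable fun j : ℕ+ => tikhonovBias α β (T ^ (-α / (α + 2 * β))) j) ∧
        ∑' j : ℕ+, tikhonovBias α β (T ^ (-α / (α + 2 * β))) j
          ≤ C * T ^ (-(2 * β - 1) / (α + 2 * β)) := by
  have hr : -1 < min (2 * (α - β)) 0 := lt_min (by linarith) (by norm_num)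
  refine ⟨(min (2 * (α - β)) 0 + 1)⁻¹ + (2 * β - 1)⁻¹,
    add_pos (inv_pos.2 (by linarith)) (inv_pos.2 (by linarith)), fun T hT => ⟨?_, ?_⟩⟩
  · exact tikhonovBias.summable_pnat hβ (by positivity)
  · have hpow (a : ℝ) : T ^ (a / (α + 2 * β)) = (T ^ (1 / (α + 2 * β))) ^ a := by
      rw [← Real.rpow_mul hT.le, one_div_mul_eq_div]
    rw [hpow (-α), hpow (-(2 * β - 1))]
    exact tikhonovBias.tsum_pnat_ridge_rpow_neg_le hβ hr (min_le_right _ _) (min_le_left _ _)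
      (by positivity)

/-- **Sequence lemma, part (A).**  For `α > 1`, `β > 1/2` with `β - 1/2 < α < β + 1/2`,
there is a constant `C > 0` (depending only on `α, β`) such that for all `T ≥ 1`, with
`ζ_T = T ^ (-α/(α+2β))`,
`∑_{j≥1} ζ_T² j^{-2β} / (j^{-α} + ζ_T)² ≤ C · T^{-(2β-1)/(α+2β)}`. -/
theorem sequence_lemma_A (α β : ℝ) (hα : 1 < α) (hβ : 1 / 2 < β)
    (h1 : β - 1 / 2 < α) (h2 : α < β + 1 / 2) :
    ∃ C > (0 : ℝ), ∀ T : ℝ, 1 ≤ T →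
      (∑' j : ℕ+, (T ^ (-α / (α + 2 * β))) ^ 2 * (j : ℝ) ^ (-(2 * β)) /
          ((j : ℝ) ^ (-α) + T ^ (-α / (α + 2 * β))) ^ 2)
        ≤ C * T ^ (-(2 * β - 1) / (α + 2 * β)) := by
  obtain ⟨C, hC, hbound⟩ := sequence_lemma_A_general hβ h1
  exact ⟨C, hC, fun T hT => (hbound T (zero_lt_one.trans_le hT)).2⟩
end

section
/- Let α > 1 and β > 1/2 be real numbers. Then there exists a constant C > 0, depending only on α and β, such that for every real T ≥ 1, setting ζ_T = T^{−α/(α+2β)}, one has ∑_{j=1}^{∞} (1/T) · j^{−α} / (j^{−α} + ζ_T)² ≤ C · T^{−(2β−1)/(α+2β)}. -/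
/-!
For `x, ζ > 0` one has `x / (x + ζ) ^ 2 ≤ min x ζ / ζ ^ 2`. With `x = j ^ (-α)` and
`c = ζ ^ (-1 / α)` the minimum is `max c j ^ (-α)`: the cut-off `c` separates the eigenvalues above
the ridge parameter from those below it. The function `t ↦ max c t ^ (-α)` is antitone, so its sum
over `j ≥ 1` is at most its integral over `(0, ∞)`, which is `α / (α - 1) * c ^ (1 - α)`. Hence the
sum of `j ^ (-α) / (j ^ (-α) + ζ) ^ 2` is `O(ζ ^ (-(1 + 1 / α)))`, and the rate in `T` follows on
inserting `ζ = T ^ (-α / (α + 2 * β))`.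
-/

open MeasureTheory Set

section TruncatedPower

variable {c p : ℝ}

theorem antitone_max_rpow (hc : 0 < c) (hp : p ≤ 0) : Antitone fun t : ℝ ↦ max c t ^ p :=
  fun _ _ hst ↦ Real.rpow_le_rpow_of_nonpos (lt_max_of_lt_left hc) (max_le_max_left c hst) hp

theorem max_rpow_eq_min_rpow {x y : ℝ} (hx : 0 < x) (hy : 0 < y) (hp : p ≤ 0) :
    max x y ^ p = min (x ^ p) (y ^ p) :=
  (Real.antitoneOn_rpow_Ioi_of_exponent_nonpos hp).map_max hx hy

theorem eqOn_max_rpow_Ioc : EqOn (fun t : ℝ ↦ max c t ^ p) (fun _ ↦ c ^ p) (Ioc 0 c) :=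
  fun t ht ↦ by simp only [max_eq_left ht.2]

theorem eqOn_max_rpow_Ioi : EqOn (fun t : ℝ ↦ max c t ^ p) (fun t ↦ t ^ p) (Ioi c) :=
  fun t ht ↦ by simp only [max_eq_right (mem_Ioi.mp ht).le]

theorem integrableOn_Ioc_max_rpow : IntegrableOn (fun t : ℝ ↦ max c t ^ p) (Ioc 0 c) :=
  (integrableOn_const (by simp)).congr_fun eqOn_max_rpow_Ioc.symm measurableSet_Ioc

theorem integrableOn_Ioi_max_rpow (hc : 0 < c) (hp : p < -1) :
    IntegrableOn (fun t : ℝ ↦ max c t ^ p) (Ioi c) :=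
  (integrableOn_Ioi_rpow_of_lt hp hc).congr_fun eqOn_max_rpow_Ioi.symm measurableSet_Ioi

theorem integrableOn_Ioi_zero_max_rpow (hc : 0 < c) (hp : p < -1) :
    IntegrableOn (fun t : ℝ ↦ max c t ^ p) (Ioi 0) := by
  rw [← Ioc_union_Ioi_eq_Ioi hc.le]
  exact integrableOn_Ioc_max_rpow.union (integrableOn_Ioi_max_rpow hc hp)

theorem integral_Ioi_zero_max_rpow (hc : 0 < c) (hp : p < -1) :
    ∫ t in Ioi (0 : ℝ), max c t ^ p = p / (p + 1) * c ^ (p + 1) := by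
  have hp1 : p + 1 ≠ 0 := by linarith
  calc ∫ t in Ioi (0 : ℝ), max c t ^ p
      = (∫ t in Ioc 0 c, max c t ^ p) + ∫ t in Ioi c, max c t ^ p := by
        rw [← Ioc_union_Ioi_eq_Ioi hc.le,
          setIntegral_union Ioc_disjoint_Ioi_same measurableSet_Ioi
            integrableOn_Ioc_max_rpow (integrableOn_Ioi_max_rpow hc hp)]
    _ = (∫ _ in Ioc 0 c, c ^ p) + ∫ t in Ioi c, t ^ p := by
        rw [setIntegral_congr_fun measurableSet_Ioc eqOn_max_rpow_Ioc,
          setIntegral_congr_fun measurableSet_Ioi eqOn_max_rpow_Ioi]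
    _ = c * c ^ p + -c ^ (p + 1) / (p + 1) := by
        rw [integral_Ioi_rpow_of_lt hp hc]
        simp [hc.le]
    _ = p / (p + 1) * c ^ (p + 1) := by
        rw [Real.rpow_add_one hc.ne']
        field_simp
        ring

theorem summable_max_natCast_rpow (hc : 0 < c) (hp : p < -1) :
    Summable fun n : ℕ ↦ max c n ^ p :=
  ((antitone_max_rpow hc (by linarith)).antitoneOn _).summable_of_integrableOn_Ioi_zero
    (integrableOn_Ioi_zero_max_rpow hc hp) fun _ _ ↦ by positivity

theorem tsum_pnat_max_rpow_le (hc : 0 < c) (hp : p < -1) :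
    ∑' j : ℕ+, max c (j : ℝ) ^ p ≤ p / (p + 1) * c ^ (p + 1) := by
  rw [tsum_pnat_eq_tsum_succ (f := fun n : ℕ ↦ max c (n : ℝ) ^ p),
    ← integral_Ioi_zero_max_rpow hc hp]
  exact ((antitone_max_rpow hc (by linarith)).antitoneOn _).tsum_add_one_le_integral
    (integrableOn_Ioi_zero_max_rpow hc hp) fun _ _ ↦ by positivity

end TruncatedPower

section Ridge

theorem div_add_sq_le_min_div_sq {x ζ : ℝ} (hx : 0 < x) (hζ : 0 < ζ) :
    x / (x + ζ) ^ 2 ≤ min x ζ / ζ ^ 2 := by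
  rw [← min_div_div_right (sq_nonneg ζ), le_min_iff]
  constructor
  · gcongr
    linarith
  · rw [div_le_div_iff₀ (by positivity) (by positivity)]
    have hgap : 0 ≤ ζ * x ^ 2 + x * ζ ^ 2 + ζ ^ 3 := by positivity
    linarith

variable {α ζ : ℝ}

theorem rpow_neg_div_add_sq_le {x : ℝ} (hα : 0 < α) (hζ : 0 < ζ) (hx : 0 < x) :
    x ^ (-α) / (x ^ (-α) + ζ) ^ 2 ≤ max (ζ ^ (-1 / α)) x ^ (-α) / ζ ^ 2 := by
  have hcut : (ζ ^ (-1 / α)) ^ (-α) = ζ := by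
    rw [← Real.rpow_mul hζ.le, show -1 / α * -α = 1 by field_simp, Real.rpow_one]
  rw [max_rpow_eq_min_rpow (by positivity) hx (by linarith), hcut, min_comm]
  exact div_add_sq_le_min_div_sq (by positivity) hζ

theorem summable_pnat_max_rpow_div_sq (hα : 1 < α) (hζ : 0 < ζ) :
    Summable fun j : ℕ+ ↦ max (ζ ^ (-1 / α)) (j : ℝ) ^ (-α) / ζ ^ 2 :=
  ((summable_max_natCast_rpow (by positivity) (by linarith)).comp_injective
    PNat.coe_injective).div_const _

theorem summable_pnat_rpow_neg_div_add_sq (hα : 1 < α) (hζ : 0 < ζ) :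
    Summable fun j : ℕ+ ↦ (j : ℝ) ^ (-α) / ((j : ℝ) ^ (-α) + ζ) ^ 2 :=
  (summable_pnat_max_rpow_div_sq hα hζ).of_nonneg_of_le (fun _ ↦ by positivity) fun j ↦
    rpow_neg_div_add_sq_le (by linarith) hζ (by exact_mod_cast j.pos)

theorem tsum_pnat_rpow_neg_div_add_sq_le (hα : 1 < α) (hζ : 0 < ζ) :
    ∑' j : ℕ+, (j : ℝ) ^ (-α) / ((j : ℝ) ^ (-α) + ζ) ^ 2 ≤
      α / (α - 1) * ζ ^ (-(1 + 1 / α)) := by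
  have hα0 : α ≠ 0 := by linarith
  have hexp : (ζ ^ (-1 / α)) ^ (-α + 1) / ζ ^ 2 = ζ ^ (-(1 + 1 / α)) := by
    rw [← Real.rpow_mul hζ.le, ← Real.rpow_natCast, ← Real.rpow_sub hζ]
    congr 1
    push_cast
    field_simp
    ring
  have hconst : -α / (-α + 1) = α / (α - 1) := by
    rw [← neg_div_neg_eq]
    ring_nf
  calc ∑' j : ℕ+, (j : ℝ) ^ (-α) / ((j : ℝ) ^ (-α) + ζ) ^ 2
      ≤ ∑' j : ℕ+, max (ζ ^ (-1 / α)) (j : ℝ) ^ (-α) / ζ ^ 2 :=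
        (summable_pnat_rpow_neg_div_add_sq hα hζ).tsum_le_tsum
          (fun j ↦ rpow_neg_div_add_sq_le (by linarith) hζ (by exact_mod_cast j.pos))
          (summable_pnat_max_rpow_div_sq hα hζ)
    _ = (∑' j : ℕ+, max (ζ ^ (-1 / α)) (j : ℝ) ^ (-α)) / ζ ^ 2 := tsum_div_const
    _ ≤ -α / (-α + 1) * (ζ ^ (-1 / α)) ^ (-α + 1) / ζ ^ 2 := by
        gcongr
        exact tsum_pnat_max_rpow_le (by positivity) (by linarith)
    _ = α / (α - 1) * ζ ^ (-(1 + 1 / α)) := by rw [mul_div_assoc, hexp, hconst]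

end Ridge

theorem sequence_lemma_B_general {α β T : ℝ} (hα : 1 < α) (hαβ : α + 2 * β ≠ 0) (hT : 0 < T) :
    (Summable fun j : ℕ+ ↦ (1 / T) * (j : ℝ) ^ (-α) /
        ((j : ℝ) ^ (-α) + T ^ (-α / (α + 2 * β))) ^ 2) ∧
      ∑' j : ℕ+, (1 / T) * (j : ℝ) ^ (-α) / ((j : ℝ) ^ (-α) + T ^ (-α / (α + 2 * β))) ^ 2 ≤
        α / (α - 1) * T ^ (-(2 * β - 1) / (α + 2 * β)) := by
  have hα0 : α ≠ 0 := by linarith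
  set ζ := T ^ (-α / (α + 2 * β)) with hζ_def
  have hζ : 0 < ζ := by positivity
  have hrate : 1 / T * ζ ^ (-(1 + 1 / α)) = T ^ (-(2 * β - 1) / (α + 2 * β)) := by
    rw [hζ_def, ← Real.rpow_mul hT.le, one_div, ← Real.rpow_neg_one, ← Real.rpow_add hT]
    congr 1
    field_simp
    ring
  simp only [mul_div_assoc]
  refine ⟨(summable_pnat_rpow_neg_div_add_sq hα hζ).mul_left _, ?_⟩
  rw [tsum_mul_left, ← hrate, mul_left_comm]
  gcongr
  exact tsum_pnat_rpow_neg_div_add_sq_le hα hζ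

/-- **Sequence lemma, part (B).**  For `α > 1`, `β > 1/2`, there is a constant `C > 0`
(depending only on `α, β`) such that for all `T ≥ 1`, with `ζ_T = T ^ (-α/(α+2β))`,
`∑_{j≥1} (1/T) · j^{-α} / (j^{-α} + ζ_T)² ≤ C · T^{-(2β-1)/(α+2β)}`. -/
theorem sequence_lemma_B (α β : ℝ) (hα : 1 < α) (hβ : 1 / 2 < β) :
    ∃ C > (0 : ℝ), ∀ T : ℝ, 1 ≤ T →
      (∑' j : ℕ+, (1 / T) * (j : ℝ) ^ (-α) /
          ((j : ℝ) ^ (-α) + T ^ (-α / (α + 2 * β))) ^ 2)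
        ≤ C * T ^ (-(2 * β - 1) / (α + 2 * β)) :=
  ⟨α / (α - 1), div_pos (by linarith) (by linarith), fun _ hT ↦
    (sequence_lemma_B_general hα (by linarith) (by linarith)).2⟩
end

section
/- Let α > 1 and β > 1/2 be real numbers. Then there exists a constant C > 0, depending only on α and β, such that for every real T ≥ 1, setting ζ_T = T^{−α/(α+2β)}, one has ∑_{j=1}^{∞} j^{−2α} / (j^{−α} + ζ_T)² ≤ C · T^{1/(α+2β)}. -/
/-!
Multiplying numerator and denominator by `x ^ α` gives `x ^ (-α) / (x ^ (-α) + ζ) = 1 / (1 + u ^ α)`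
with `u = ζ ^ (1 / α) * x`, and `1 + u ^ α ≥ max 1 u ^ α`. By the integral test the sum of the
`p`-th powers of these ratios over `x = 1, 2, …` is at most `ζ ^ (-1 / α)`, the Jacobian of the
change of variables, times `∫₀^∞ max 1 u ^ (-α * p) du = α * p / (α * p - 1)`. The theorem is the
case `p = 2`, `ζ = ζ_T`.
-/

open Set MeasureTheory

section MaxOneRpow

variable {p : ℝ}

theorem antitone_max_one_rpow_neg (hp : 0 ≤ p) : Antitone fun x : ℝ ↦ max 1 x ^ (-p) :=
  fun _ _ hxy ↦ Real.rpow_le_rpow_of_nonpos (by positivity) (max_le_max_left 1 hxy) (by linarith)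

theorem eqOn_max_one_rpow_Ioi_one : EqOn (fun x : ℝ ↦ max 1 x ^ p) (fun x ↦ x ^ p) (Ioi 1) :=
  fun _ hx ↦ congrArg (· ^ p) (max_eq_right (le_of_lt hx))

theorem integrableOn_Ioi_one_max_one_rpow_neg (hp : 1 < p) :
    IntegrableOn (fun x : ℝ ↦ max 1 x ^ (-p)) (Ioi 1) :=
  (integrableOn_Ioi_rpow_of_lt (by linarith) one_pos).congr_fun eqOn_max_one_rpow_Ioi_one.symm
    measurableSet_Ioi

theorem integrableOn_Ioi_zero_max_one_rpow_neg (hp : 1 < p) :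
    IntegrableOn (fun x : ℝ ↦ max 1 x ^ (-p)) (Ioi 0) := by
  have h_Ioc : IntegrableOn (fun x : ℝ ↦ max 1 x ^ (-p)) (Ioc 0 1) :=
    (antitone_max_one_rpow_neg (by linarith)).intervalIntegrable.1
  rw [← Ioc_union_Ioi_eq_Ioi zero_le_one]
  exact h_Ioc.union (integrableOn_Ioi_one_max_one_rpow_neg hp)

theorem integral_Ioi_zero_max_one_rpow_neg (hp : 1 < p) :
    ∫ x in Ioi (0 : ℝ), max 1 x ^ (-p) = p / (p - 1) := by
  have h_head : ∫ x in (0 : ℝ)..1, max 1 x ^ (-p) = 1 := by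
    have h_one : EqOn (fun x : ℝ ↦ max 1 x ^ (-p)) 1 (uIcc 0 1) := fun x hx ↦ by
      rw [uIcc_of_le zero_le_one] at hx
      simp [max_eq_left hx.2]
    simp [intervalIntegral.integral_congr h_one]
  have h_tail : ∫ x in Ioi (1 : ℝ), max 1 x ^ (-p) = 1 / (p - 1) := by
    rw [setIntegral_congr_fun measurableSet_Ioi eqOn_max_one_rpow_Ioi_one,
      integral_Ioi_rpow_of_lt (by linarith) one_pos, Real.one_rpow, neg_div, ← div_neg]
    ring
  have hp' : p - 1 ≠ 0 := by linarith
  rw [← intervalIntegral.integral_interval_add_Ioi (integrableOn_Ioi_zero_max_one_rpow_neg hp)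
    (integrableOn_Ioi_one_max_one_rpow_neg hp), h_head, h_tail]
  field_simp
  ring

variable {c : ℝ}

theorem antitone_max_one_mul_rpow_neg (hp : 0 ≤ p) (hc : 0 ≤ c) :
    Antitone fun x : ℝ ↦ max 1 (c * x) ^ (-p) :=
  (antitone_max_one_rpow_neg hp).comp_monotone (monotone_mul_left_of_nonneg hc)

theorem integrableOn_Ioi_zero_max_one_mul_rpow_neg (hp : 1 < p) (hc : 0 < c) :
    IntegrableOn (fun x : ℝ ↦ max 1 (c * x) ^ (-p)) (Ioi 0) := by
  rw [integrableOn_Ioi_comp_mul_left_iff (fun x ↦ max 1 x ^ (-p)) 0 hc, mul_zero]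
  exact integrableOn_Ioi_zero_max_one_rpow_neg hp

theorem summable_pnat_max_one_mul_rpow_neg (hp : 1 < p) (hc : 0 < c) :
    Summable fun j : ℕ+ ↦ max 1 (c * j) ^ (-p) :=
  (((antitone_max_one_mul_rpow_neg (by linarith) hc.le).antitoneOn _
    ).summable_of_integrableOn_Ioi_zero (integrableOn_Ioi_zero_max_one_mul_rpow_neg hp hc)
      fun _ _ ↦ by positivity).comp_injective PNat.coe_injective

theorem tsum_pnat_max_one_mul_rpow_neg_le (hp : 1 < p) (hc : 0 < c) :
    ∑' j : ℕ+, max 1 (c * j) ^ (-p) ≤ p / (p - 1) * c⁻¹ :=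
  calc ∑' j : ℕ+, max 1 (c * j) ^ (-p)
      = ∑' n : ℕ, max 1 (c * (n + 1 : ℕ)) ^ (-p) :=
        tsum_pnat_eq_tsum_succ (f := fun n : ℕ ↦ max 1 (c * n) ^ (-p))
    _ ≤ ∫ x in Ioi (0 : ℝ), max 1 (c * x) ^ (-p) :=
        ((antitone_max_one_mul_rpow_neg (by linarith) hc.le).antitoneOn _).tsum_add_one_le_integral
          (integrableOn_Ioi_zero_max_one_mul_rpow_neg hp hc) fun _ _ ↦ by positivity
    _ = p / (p - 1) * c⁻¹ := by
        rw [integral_comp_mul_left_Ioi (fun x ↦ max 1 x ^ (-p)) 0 hc, mul_zero,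
          integral_Ioi_zero_max_one_rpow_neg hp, smul_eq_mul, mul_comm]

end MaxOneRpow

theorem max_one_rpow_le_one_add_rpow {α u : ℝ} (hα : 0 ≤ α) (hu : 0 ≤ u) :
    max 1 u ^ α ≤ 1 + u ^ α := by
  rw [Real.rpow_max zero_le_one hu hα, Real.one_rpow]
  exact max_le_add_of_nonneg zero_le_one (Real.rpow_nonneg hu α)

theorem rpow_neg_div_rpow_neg_add_rpow_le {α c x : ℝ} (hα : 0 ≤ α) (hc : 0 ≤ c) (hx : 0 < x) :
    x ^ (-α) / (x ^ (-α) + c ^ α) ≤ max 1 (c * x) ^ (-α) :=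
  calc x ^ (-α) / (x ^ (-α) + c ^ α) = (1 + (c * x) ^ α)⁻¹ := by
        rw [Real.mul_rpow hc hx.le, Real.rpow_neg hx.le]
        field_simp
    _ ≤ (max 1 (c * x) ^ α)⁻¹ := by
        gcongr
        exact max_one_rpow_le_one_add_rpow hα (by positivity)
    _ = max 1 (c * x) ^ (-α) := (Real.rpow_neg (by positivity) α).symm

theorem rpow_neg_div_add_rpow_le {α p ζ x : ℝ} (hα : 0 < α) (hp : 0 ≤ p) (hζ : 0 ≤ ζ)
    (hx : 0 < x) :
    (x ^ (-α) / (x ^ (-α) + ζ)) ^ p ≤ max 1 (ζ ^ α⁻¹ * x) ^ (-(α * p)) := by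
  have h_base := rpow_neg_div_rpow_neg_add_rpow_le hα.le (Real.rpow_nonneg hζ α⁻¹) hx
  rw [Real.rpow_inv_rpow hζ hα.ne'] at h_base
  rw [← neg_mul, Real.rpow_mul (by positivity)]
  gcongr

theorem sequence_lemma_C_general {α p ζ : ℝ} (hα : 0 < α) (hp : 1 < α * p) (hζ : 0 < ζ) :
    (Summable fun j : ℕ+ ↦ ((j : ℝ) ^ (-α) / ((j : ℝ) ^ (-α) + ζ)) ^ p) ∧
      ∑' j : ℕ+, ((j : ℝ) ^ (-α) / ((j : ℝ) ^ (-α) + ζ)) ^ p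
        ≤ α * p / (α * p - 1) * ζ ^ (-α⁻¹) := by
  have hp_nonneg : 0 ≤ p := (pos_of_mul_pos_right (one_pos.trans hp) hα.le).le
  have h_term (j : ℕ+) := rpow_neg_div_add_rpow_le hα hp_nonneg hζ.le (Nat.cast_pos.2 j.pos)
  have h_scale : 0 < ζ ^ α⁻¹ := Real.rpow_pos_of_pos hζ _
  have h_majorant := summable_pnat_max_one_mul_rpow_neg hp h_scale
  have h_summable : Summable fun j : ℕ+ ↦ ((j : ℝ) ^ (-α) / ((j : ℝ) ^ (-α) + ζ)) ^ p :=
    h_majorant.of_nonneg_of_le (fun _ ↦ by positivity) h_term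
  refine ⟨h_summable, (h_summable.tsum_le_tsum h_term h_majorant).trans ?_⟩
  rw [Real.rpow_neg hζ.le]
  exact tsum_pnat_max_one_mul_rpow_neg_le hp h_scale

theorem rpow_neg_two_mul_div_sq {α ζ x : ℝ} (hx : 0 ≤ x) :
    x ^ (-(2 * α)) / (x ^ (-α) + ζ) ^ 2 = (x ^ (-α) / (x ^ (-α) + ζ)) ^ (2 : ℝ) := by
  rw [Real.rpow_two, div_pow, ← Real.rpow_mul_natCast hx]
  congr 2
  push_cast
  ring

theorem tsum_pnat_rpow_neg_two_mul_div_sq_le {α ζ : ℝ} (hα : 1 / 2 < α) (hζ : 0 < ζ) :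
    ∑' j : ℕ+, (j : ℝ) ^ (-(2 * α)) / ((j : ℝ) ^ (-α) + ζ) ^ 2
      ≤ α * 2 / (α * 2 - 1) * ζ ^ (-α⁻¹) := by
  simp only [rpow_neg_two_mul_div_sq (Nat.cast_nonneg _)]
  exact (sequence_lemma_C_general (by linarith) (by linarith) hζ).2

theorem rpow_neg_div_rpow_neg_inv {α T : ℝ} (hα : α ≠ 0) (hT : 0 ≤ T) (s : ℝ) :
    (T ^ (-α / s)) ^ (-α⁻¹) = T ^ (1 / s) := by
  rw [← Real.rpow_mul hT]
  congr 1
  field_simp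

/-- **Sequence lemma, part (C).**  For `α > 1`, `β > 1/2`, there is a constant `C > 0`
(depending only on `α, β`) such that for all `T ≥ 1`, with `ζ_T = T ^ (-α/(α+2β))`,
`∑_{j≥1} j^{-2α} / (j^{-α} + ζ_T)² ≤ C · T^{1/(α+2β)}`. -/
theorem sequence_lemma_C (α β : ℝ) (hα : 1 < α) (hβ : 1 / 2 < β) :
    ∃ C > (0 : ℝ), ∀ T : ℝ, 1 ≤ T →
      (∑' j : ℕ+, (j : ℝ) ^ (-(2 * α)) /
          ((j : ℝ) ^ (-α) + T ^ (-α / (α + 2 * β))) ^ 2)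
        ≤ C * T ^ ((1 : ℝ) / (α + 2 * β)) := by
  have h_denom : 0 < α * 2 - 1 := by linarith
  refine ⟨α * 2 / (α * 2 - 1), by positivity, fun T hT ↦ ?_⟩
  have hT_pos : 0 < T := by linarith
  rw [← rpow_neg_div_rpow_neg_inv (one_pos.trans hα).ne' hT_pos.le]
  exact tsum_pnat_rpow_neg_two_mul_div_sq_le (by linarith) (Real.rpow_pos_of_pos hT_pos _)
end
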